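/- Let γ ∈ [0,2), d := 2(γ+1)/(2−γ), and let n be a real number with n > 2 and n ≥ 2d. Let b̃ over (ℕ₀, m̃) be the one-dimensional graph associated with the γ-anti-tree, with intrinsic degree path metric ρ̃ and closed balls B̃_k(r). Then there exists C ≥ 1 such that for every x in the γ-anti-tree and every r ≥ max(1, ρ̃(0,|x|)): C⁻¹ · m̃(B̃_{|x|}(r))^{2/n} / r ≤ h̃_{B̃_{|x|}(r), n} ≤ C · m̃(B̃_{|x|}(r))^{2/n} / r, where h̃_{U,n} := inf { (b̃ρ̃)(∂W) / m̃(W)^{(n−2)/n} : W ⊆ U finite nonempty }. -/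

import Mathlib

open scoped BigOperators

/-- Vertex set of the anti-tree with sphere function `s`:
the `k`-th sphere has `s k` elements. -/
def AntiTree (s : ℕ → ℕ) : Type := Σ k : ℕ, Fin (s k)

namespace AntiTree

/-- Standard edge weights of the anti-tree: consecutive spheres are completely connected,
and there are no other edges. -/
def wt (s : ℕ → ℕ) (x y : AntiTree s) : ℝ :=
  if x.1 + 1 = y.1 ∨ y.1 + 1 = x.1 then 1 else 0

/-- Weighted vertex degree with respect to the counting measure `m ≡ 1`. -/
noncomputable def Deg (s : ℕ → ℕ) (x : AntiTree s) : ℝ := ∑' y : AntiTree s, wt s x y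

end AntiTree

/-- Intrinsic degree path (pseudo-)metric of a weighted graph `b` whose weighted degree
function is `D`:  `ρ(x,y)` is the infimum over finite paths from `x` to `y` of
`∑_j min(1/D(x_j), 1/D(x_{j+1}))^{1/2}`. -/
noncomputable def pathMetric {X : Type*} (b : X → X → ℝ) (D : X → ℝ) (x y : X) : ℝ :=
  sInf { L : ℝ | ∃ (k : ℕ) (p : ℕ → X), p 0 = x ∧ p k = y ∧
    (∀ j < k, 0 < b (p j) (p (j + 1))) ∧
    L = ∑ j ∈ Finset.range k, Real.sqrt (min (1 / D (p j)) (1 / D (p (j + 1)))) }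

/-- The intrinsic degree path metric of the anti-tree. -/
noncomputable def AntiTree.rho (s : ℕ → ℕ) : AntiTree s → AntiTree s → ℝ :=
  pathMetric (AntiTree.wt s) (AntiTree.Deg s)

/-- Closed balls with respect to the intrinsic degree path metric. -/
noncomputable def AntiTree.ball (s : ℕ → ℕ) (x : AntiTree s) (r : ℝ) : Set (AntiTree s) :=
  {y | AntiTree.rho s x y ≤ r}

/-- The sphere function of the `γ`-anti-tree: `s (k-1) = ⌊k ^ γ⌋` for `k ≥ 1`,
i.e. `s k = ⌊(k+1) ^ γ⌋`. -/
noncomputable def gammaSphere (γ : ℝ) : ℕ → ℕ := fun k => ⌊((k : ℝ) + 1) ^ γ⌋₊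
namespace OneDim

/-- Measure of the one-dimensional graph associated with an anti-tree. -/
noncomputable def m (s : ℕ → ℕ) (k : ℕ) : ℝ := (s k : ℝ)

/-- Edge weights of the one-dimensional graph associated with an anti-tree. -/
noncomputable def wt (s : ℕ → ℕ) (k l : ℕ) : ℝ :=
  if k + 1 = l ∨ l + 1 = k then (s k : ℝ) * (s l : ℝ) else 0

/-- Weighted vertex degree of the one-dimensional graph. -/
noncomputable def Deg (s : ℕ → ℕ) (k : ℕ) : ℝ := (1 / m s k) * ∑' l : ℕ, wt s k l

/-- Intrinsic degree path metric of the one-dimensional graph. -/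
noncomputable def rho (s : ℕ → ℕ) : ℕ → ℕ → ℝ := pathMetric (wt s) (Deg s)

/-- Closed balls of the one-dimensional graph. -/
noncomputable def ball (s : ℕ → ℕ) (k : ℕ) (r : ℝ) : Set ℕ := {l | rho s k l ≤ r}

/-- Measure of a subset of the one-dimensional graph. -/
noncomputable def vol (s : ℕ → ℕ) (A : Set ℕ) : ℝ := ∑' l : ℕ, Set.indicator A (m s) l

end OneDim
/-- `(bρ)(∂W)`: the weighted boundary measure of a set `W`, i.e. the sum of
`b(x,y) ρ(x,y)` over all ordered pairs with exactly one of `x,y` in `W`. -/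
noncomputable def boundarySum {X : Type*} (b ρ : X → X → ℝ) (W : Set X) : ℝ :=
  ∑' p : X × X,
    Set.indicator {q : X × X | (q.1 ∈ W ∧ q.2 ∉ W) ∨ (q.1 ∉ W ∧ q.2 ∈ W)}
      (fun q => b q.1 q.2 * ρ q.1 q.2) p

/-- The isoperimetric constant `h_{U,n}`: the infimum of `(bρ)(∂W) / m(W)^{(n-2)/n}`
over finite nonempty subsets `W ⊆ U`. -/
noncomputable def isoConst {X : Type*} (b ρ : X → X → ℝ) (m : X → ℝ) (U : Set X) (n : ℝ) : ℝ :=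
  sInf { h : ℝ | ∃ W : Finset X, ↑W ⊆ U ∧ W.Nonempty ∧
    h = boundarySum b ρ ↑W / (∑ x ∈ W, m x) ^ ((n - 2) / n) }

namespace OneDim

/-- Length of the edge between `k` and `k + 1` in the intrinsic degree path metric. -/
noncomputable def edgeLength (s : ℕ → ℕ) (k : ℕ) : ℝ :=
  Real.sqrt (min (1 / Deg s k) (1 / Deg s (k + 1)))

/-- Length of the straight path from `0` to `k`. -/
noncomputable def height (s : ℕ → ℕ) (k : ℕ) : ℝ := ∑ j ∈ Finset.range k, edgeLength s j

lemma edgeLength_nonneg (s : ℕ → ℕ) (k : ℕ) : 0 ≤ edgeLength s k := Real.sqrt_nonneg _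

lemma height_succ (s : ℕ → ℕ) (k : ℕ) : height s (k + 1) = height s k + edgeLength s k :=
  Finset.sum_range_succ _ _

lemma height_monotone (s : ℕ → ℕ) : Monotone (height s) :=
  monotone_nat_of_le_succ fun k => by
    rw [height_succ]; linarith [edgeLength_nonneg s k]

lemma height_nonneg (s : ℕ → ℕ) (k : ℕ) : 0 ≤ height s k :=
  Finset.sum_nonneg fun j _ => edgeLength_nonneg s j

lemma wt_nonneg (s : ℕ → ℕ) (k l : ℕ) : 0 ≤ wt s k l := by
  unfold wt; split_ifs <;> positivity

lemma wt_succ (s : ℕ → ℕ) (k : ℕ) : wt s k (k + 1) = s k * s (k + 1) := by simp [wt]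

lemma wt_succ_left (s : ℕ → ℕ) (k : ℕ) : wt s (k + 1) k = s (k + 1) * s k := by simp [wt]

lemma wt_eq_zero (s : ℕ → ℕ) {k l : ℕ} (h : ¬(k + 1 = l ∨ l + 1 = k)) : wt s k l = 0 := if_neg h

/-- The graph is a path, so its path metric is the difference of heights. -/
lemma rho_eq_abs_height_sub {s : ℕ → ℕ} (hs : ∀ k, 0 < s k) (k l : ℕ) :
    rho s k l = |height s k - height s l| := by
  have hs' : ∀ k, (0 : ℝ) < s k := fun k => by exact_mod_cast hs k
  have hmem : ∃ (d : ℕ) (p : ℕ → ℕ), p 0 = k ∧ p d = l ∧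
      (∀ j < d, 0 < wt s (p j) (p (j + 1))) ∧ |height s k - height s l| =
        ∑ j ∈ Finset.range d, Real.sqrt (min (1 / Deg s (p j)) (1 / Deg s (p (j + 1)))) := by
    rcases le_total k l with h | h
    · refine ⟨l - k, fun j => k + j, rfl, Nat.add_sub_cancel' h, fun j _ => ?_, ?_⟩
      · simp only [← add_assoc, wt_succ]
        exact mul_pos (hs' _) (hs' _)
      · have h1 := Finset.sum_range_sub (fun j => height s (k + j)) (l - k)
        simp only [← add_assoc, height_succ, add_sub_cancel_left, add_zero,
          Nat.add_sub_cancel' h] at h1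
        rw [abs_sub_comm, abs_of_nonneg (sub_nonneg.2 (height_monotone s h)), ← h1]
        rfl
    · refine ⟨k - l, fun j => k - j, rfl, Nat.sub_sub_self h, fun j hj => ?_, ?_⟩
      · obtain ⟨i, hi⟩ : ∃ i, k - j = i + 1 := ⟨k - j - 1, by omega⟩
        have hi' : k - (j + 1) = i := by omega
        simp only [hi, hi', wt_succ_left]; exact mul_pos (hs' _) (hs' _)
      · have h1 := Finset.sum_range_sub' (fun j => height s (k - j)) (k - l)
        simp only [Nat.sub_zero, Nat.sub_sub_self h] at h1
        rw [abs_of_nonneg (sub_nonneg.2 (height_monotone s h)), ← h1]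
        refine Finset.sum_congr rfl fun j hj => ?_
        obtain ⟨i, hi⟩ : ∃ i, k - j = i + 1 :=
          ⟨k - j - 1, by have := Finset.mem_range.1 hj; omega⟩
        have hi' : k - (j + 1) = i := by omega
        simp only [hi, hi', height_succ, add_sub_cancel_left, edgeLength]
        rw [min_comm]
  refine le_antisymm (csInf_le ⟨0, ?_⟩ hmem) (le_csInf ⟨_, hmem⟩ ?_)
  · rintro L ⟨d, p, -, -, -, rfl⟩
    exact Finset.sum_nonneg fun j _ => Real.sqrt_nonneg _
  · rintro L ⟨d, p, rfl, rfl, hp, rfl⟩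
    refine dist_le_range_sum_of_dist_le (f := fun j => height s (p j)) d fun {j} hj => ?_
    have hadj : p j + 1 = p (j + 1) ∨ p (j + 1) + 1 = p j := by
      by_contra h
      exact (hp j hj).ne' (wt_eq_zero s h)
    rcases hadj with h | h
    · rw [← h, dist_comm, Real.dist_eq, height_succ, add_sub_cancel_left,
        abs_of_nonneg (edgeLength_nonneg _ _), edgeLength]
    · rw [← h, Real.dist_eq, height_succ, add_sub_cancel_left,
        abs_of_nonneg (edgeLength_nonneg _ _), edgeLength, min_comm]

lemma rho_nonneg {s : ℕ → ℕ} (hs : ∀ k, 0 < s k) (k l : ℕ) : 0 ≤ rho s k l := by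
  rw [rho_eq_abs_height_sub hs]; exact abs_nonneg _

lemma rho_zero {s : ℕ → ℕ} (hs : ∀ k, 0 < s k) (k : ℕ) : rho s 0 k = height s k := by
  rw [rho_eq_abs_height_sub hs, abs_sub_comm, abs_of_nonneg
    (sub_nonneg.2 (height_monotone s k.zero_le))]
  simp [height]

lemma rho_succ {s : ℕ → ℕ} (hs : ∀ k, 0 < s k) (k : ℕ) : rho s k (k + 1) = edgeLength s k := by
  rw [rho_eq_abs_height_sub hs, height_succ, abs_sub_comm, add_sub_cancel_left,
    abs_of_nonneg (edgeLength_nonneg _ _)]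

lemma rho_succ_left {s : ℕ → ℕ} (hs : ∀ k, 0 < s k) (k : ℕ) :
    rho s (k + 1) k = edgeLength s k := by
  rw [rho_eq_abs_height_sub hs, height_succ, add_sub_cancel_left,
    abs_of_nonneg (edgeLength_nonneg _ _)]

lemma Deg_zero {s : ℕ → ℕ} (hs : ∀ k, 0 < s k) : Deg s 0 = s 1 := by
  have h0 : (s 0 : ℝ) ≠ 0 := by exact_mod_cast (hs 0).ne'
  rw [Deg, tsum_eq_single 1 fun l hl => wt_eq_zero s (by omega), m, wt_succ]
  field_simp

lemma Deg_succ {s : ℕ → ℕ} (hs : ∀ k, 0 < s k) (k : ℕ) : Deg s (k + 1) = s k + s (k + 2) := by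
  have h0 : (s (k + 1) : ℝ) ≠ 0 := by exact_mod_cast (hs (k + 1)).ne'
  rw [Deg, tsum_eq_sum (s := {k, k + 2}) fun l hl => wt_eq_zero s (by
    simp only [Finset.mem_insert, Finset.mem_singleton] at hl; omega),
    Finset.sum_pair (by omega), m, wt_succ_left, wt_succ]
  field_simp

lemma le_Deg {s : ℕ → ℕ} (hs : ∀ k, 0 < s k) (k : ℕ) : (s (k + 1) : ℝ) ≤ Deg s k := by
  cases k with
  | zero => rw [Deg_zero hs]
  | succ k => rw [Deg_succ hs]; simp

lemma Deg_le {s : ℕ → ℕ} (hs : ∀ k, 0 < s k) (hm : Monotone s) (k : ℕ) :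
    Deg s k ≤ 2 * s (k + 1) := by
  cases k with
  | zero => rw [Deg_zero hs]; linarith [Nat.cast_nonneg (α := ℝ) (s 1)]
  | succ k =>
    have : (s k : ℝ) ≤ s (k + 2) := by exact_mod_cast hm (by omega)
    rw [Deg_succ hs]; linarith

lemma edgeLength_le {s : ℕ → ℕ} (hs : ∀ k, 0 < s k) (k : ℕ) :
    edgeLength s k ≤ Real.sqrt (1 / s (k + 1)) :=
  Real.sqrt_le_sqrt <| (min_le_left _ _).trans <|
    one_div_le_one_div_of_le (by exact_mod_cast hs _) (le_Deg hs k)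

lemma le_edgeLength {s : ℕ → ℕ} (hs : ∀ k, 0 < s k) (hm : Monotone s) (k : ℕ) :
    Real.sqrt (1 / (2 * s (k + 2))) ≤ edgeLength s k := by
  have h1 : (0 : ℝ) < s (k + 1) := by exact_mod_cast hs _
  have h2 : (s (k + 1) : ℝ) ≤ s (k + 2) := by exact_mod_cast hm (by omega)
  refine Real.sqrt_le_sqrt (le_min ?_ ?_)
  · exact one_div_le_one_div_of_le (h1.trans_le (le_Deg hs k))
      ((Deg_le hs hm k).trans (by linarith))
  · exact one_div_le_one_div_of_le (h1.trans_le (h2.trans (le_Deg hs (k + 1)))) (Deg_le hs hm _)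

/-- A ball whose radius reaches the root is an initial segment. -/
lemma exists_ball_eq_range {s : ℕ → ℕ} (hs : ∀ k, 0 < s k)
    (hub : ∀ R, ∃ k, R < height s k) {x : ℕ} {r : ℝ} (hr : height s x ≤ r) :
    ∃ N : ℕ, ball s x r = ↑(Finset.range (N + 1)) ∧ height s N ≤ height s x + r ∧
      height s x + r < height s (N + 1) := by
  classical
  have hx := height_nonneg s x
  have hfind := Nat.find_spec (hub (height s x + r))
  have hmin : ∀ l < Nat.find (hub (height s x + r)), height s l ≤ height s x + r :=
    fun l hl => not_lt.1 (Nat.find_min _ hl)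
  rcases hM : Nat.find (hub (height s x + r)) with _ | N
  · rw [hM] at hfind
    simp only [height, Finset.range_zero, Finset.sum_empty] at hfind hx hr
    linarith
  · rw [hM] at hfind hmin
    refine ⟨N, ?_, hmin N (by omega), hfind⟩
    ext l
    simp only [ball, Set.mem_ofPred_eq, rho_eq_abs_height_sub hs, Finset.coe_range, Set.mem_Iio,
      abs_le]
    constructor
    · rintro ⟨h1, -⟩
      by_contra! h
      linarith [height_monotone s h]
    · intro h
      exact ⟨by linarith [hmin l h], by linarith [height_nonneg s l]⟩

lemma vol_coe (s : ℕ → ℕ) (A : Finset ℕ) : vol s ↑A = ∑ k ∈ A, (s k : ℝ) := by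
  rw [vol, tsum_eq_sum (s := A) fun l hl => Set.indicator_of_notMem (by simpa using hl) _]
  exact Finset.sum_congr rfl fun l hl => Set.indicator_of_mem (by simpa using hl) _

lemma boundarySum_range {s : ℕ → ℕ} (hs : ∀ k, 0 < s k) (N : ℕ) :
    boundarySum (wt s) (rho s) ↑(Finset.range (N + 1)) =
      2 * (s N * s (N + 1) * edgeLength s N) := by
  rw [boundarySum, tsum_eq_sum (s := {(N, N + 1), (N + 1, N)}), Finset.sum_pair (by simp),
    Set.indicator_of_mem (by simp), Set.indicator_of_mem (by simp), wt_succ, wt_succ_left,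
    rho_succ hs, rho_succ_left hs]
  · ring
  · rintro ⟨k, l⟩ h
    simp only [Finset.mem_insert, Finset.mem_singleton, Prod.mk.injEq] at h
    refine Set.indicator_apply_eq_zero.2 fun hkl => ?_
    simp only [Finset.coe_range, Set.mem_Iio, Set.mem_ofPred_eq] at hkl
    rw [wt_eq_zero s (by omega), zero_mul]

lemma boundarySum_nonneg {s : ℕ → ℕ} (hs : ∀ k, 0 < s k) (W : Set ℕ) :
    0 ≤ boundarySum (wt s) (rho s) W :=
  tsum_nonneg fun _ => Set.indicator_nonneg
    (fun _ _ => mul_nonneg (wt_nonneg _ _ _) (rho_nonneg hs _ _)) _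

/-- The edge leaving a finite set at its largest element bounds the boundary from below. -/
lemma le_boundarySum {s : ℕ → ℕ} (hs : ∀ k, 0 < s k) {W : Finset ℕ} {K : ℕ} (hK : K ∈ W)
    (hmax : ∀ k ∈ W, k ≤ K) :
    s K * s (K + 1) * edgeLength s K ≤ boundarySum (wt s) (rho s) ↑W := by
  have hK' : K + 1 ∉ W := fun h => by have := hmax _ h; omega
  rw [← wt_succ, ← rho_succ hs]
  have hsum : Summable (Set.indicator {q : ℕ × ℕ | (q.1 ∈ (W : Set ℕ) ∧ q.2 ∉ (W : Set ℕ)) ∨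
      (q.1 ∉ (W : Set ℕ) ∧ q.2 ∈ (W : Set ℕ))} fun q => wt s q.1 q.2 * rho s q.1 q.2) := by
    refine summable_of_ne_finset_zero (s := Finset.range (K + 2) ×ˢ Finset.range (K + 2)) ?_
    rintro ⟨k, l⟩ h
    refine Set.indicator_apply_eq_zero.2 fun hkl => ?_
    simp only [Finset.mem_product, Finset.mem_range] at h
    simp only [Set.mem_ofPred_eq, Finset.mem_coe] at hkl
    have hkl' : ¬(k + 1 = l ∨ l + 1 = k) := by
      rcases hkl with ⟨hk, -⟩ | ⟨-, hl⟩
      · have := hmax k hk; omega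
      · have := hmax l hl; omega
    rw [wt_eq_zero s hkl', zero_mul]
  refine le_trans (le_of_eq ?_) (hsum.le_tsum (K, K + 1) fun _ _ => Set.indicator_nonneg
    (fun _ _ => mul_nonneg (wt_nonneg _ _ _) (rho_nonneg hs _ _)) _)
  rw [Set.indicator_of_mem (by simp [hK, hK'])]

end OneDim

/-- Power sums with nonpositive exponent `p - 1`, bounded above. -/
lemma sum_rpow_sub_one_le {p : ℝ} (hp0 : 0 < p) (hp1 : p ≤ 1) (M : ℕ) :
    p * ∑ j ∈ Finset.range M, ((j : ℝ) + 1) ^ (p - 1) ≤ (M : ℝ) ^ p := by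
  induction M with
  | zero => simp [Real.zero_rpow hp0.ne']
  | succ M ih =>
    have hM : (0 : ℝ) < (M : ℝ) + 1 := by positivity
    have hb := rpow_one_add_le_one_add_mul_self (s := -1 / ((M : ℝ) + 1)) (p := p)
      (by rw [le_div_iff₀ hM]; linarith [Nat.cast_nonneg (α := ℝ) M]) hp0.le hp1
    have he : 1 + -1 / ((M : ℝ) + 1) = M / (M + 1) := by field_simp; ring
    rw [he, Real.div_rpow (by positivity) hM.le, div_le_iff₀ (by positivity)] at hb
    have h1 : ((M : ℝ) + 1) ^ (p - 1) = (M + 1) ^ p / (M + 1) := by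
      rw [Real.rpow_sub_one hM.ne']
    rw [Finset.sum_range_succ, mul_add, h1]
    push_cast
    have h2 : (1 + p * (-1 / ((M : ℝ) + 1))) * (M + 1) ^ p =
        (M + 1) ^ p - p * ((M + 1) ^ p / (M + 1)) := by ring
    linarith

/-- Power sums with nonnegative exponent `p - 1`, bounded below. -/
lemma le_sum_rpow_sub_one {p : ℝ} (hp1 : 1 ≤ p) (M : ℕ) :
    (M : ℝ) ^ p ≤ p * ∑ j ∈ Finset.range M, ((j : ℝ) + 1) ^ (p - 1) := by
  induction M with
  | zero => simp [Real.zero_rpow (by linarith : p ≠ 0)]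
  | succ M ih =>
    have hM : (0 : ℝ) < (M : ℝ) + 1 := by positivity
    have hb := one_add_mul_self_le_rpow_one_add (s := -1 / ((M : ℝ) + 1)) (p := p)
      (by rw [le_div_iff₀ hM]; linarith [Nat.cast_nonneg (α := ℝ) M]) hp1
    have he : 1 + -1 / ((M : ℝ) + 1) = M / (M + 1) := by field_simp; ring
    rw [he, Real.div_rpow (by positivity) hM.le, le_div_iff₀ (by positivity)] at hb
    have h1 : ((M : ℝ) + 1) ^ (p - 1) = (M + 1) ^ p / (M + 1) := by
      rw [Real.rpow_sub_one hM.ne']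
    rw [Finset.sum_range_succ, mul_add, h1]
    push_cast
    have h2 : (1 + p * (-1 / ((M : ℝ) + 1))) * (M + 1) ^ p =
        (M + 1) ^ p - p * ((M + 1) ^ p / (M + 1)) := by ring
    linarith

section GammaSphere

variable {γ : ℝ}

lemma gammaSphere_pos (hγ : 0 ≤ γ) (k : ℕ) : 0 < gammaSphere γ k :=
  Nat.floor_pos.2 (Real.one_le_rpow (by linarith [Nat.cast_nonneg (α := ℝ) k]) hγ)

lemma gammaSphere_monotone (hγ : 0 ≤ γ) : Monotone (gammaSphere γ) := fun k l h => by
  have : (k : ℝ) ≤ l := by exact_mod_cast h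
  exact Nat.floor_mono (Real.rpow_le_rpow (by positivity) (by linarith) hγ)

lemma gammaSphere_le (γ : ℝ) (k : ℕ) : (gammaSphere γ k : ℝ) ≤ ((k : ℝ) + 1) ^ γ :=
  Nat.floor_le (by positivity)

lemma rpow_le_two_mul_gammaSphere (hγ : 0 ≤ γ) (k : ℕ) :
    ((k : ℝ) + 1) ^ γ ≤ 2 * gammaSphere γ k := by
  have h1 : ((k : ℝ) + 1) ^ γ < gammaSphere γ k + 1 := Nat.lt_floor_add_one _
  have h2 : (1 : ℝ) ≤ gammaSphere γ k := by exact_mod_cast gammaSphere_pos hγ k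
  linarith

lemma gammaSphere_add_two_le (hγ : 0 ≤ γ) (k : ℕ) :
    (gammaSphere γ (k + 2) : ℝ) ≤ 3 ^ γ * ((k : ℝ) + 1) ^ γ := by
  rw [← Real.mul_rpow (by norm_num) (by positivity)]
  refine (gammaSphere_le γ _).trans (Real.rpow_le_rpow (by positivity) ?_ hγ)
  push_cast
  linarith [Nat.cast_nonneg (α := ℝ) k]

lemma sqrt_div_rpow {t : ℝ} (ht : 0 ≤ t) (c γ : ℝ) :
    Real.sqrt (c / t ^ γ) = Real.sqrt c * t ^ (-(γ / 2)) := by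
  rw [Real.sqrt_div' _ (by positivity), Real.sqrt_eq_rpow (t ^ γ), ← Real.rpow_mul ht,
    Real.rpow_neg ht, div_eq_mul_inv]
  ring_nf

open OneDim

lemma edgeLength_gammaSphere_le (hγ : 0 ≤ γ) (k : ℕ) :
    edgeLength (gammaSphere γ) k ≤ Real.sqrt 2 * ((k : ℝ) + 1) ^ (-(γ / 2)) := by
  rw [← sqrt_div_rpow (by positivity)]
  refine (edgeLength_le (gammaSphere_pos hγ) k).trans (Real.sqrt_le_sqrt ?_)
  have h0 : (0 : ℝ) < gammaSphere γ (k + 1) := by exact_mod_cast gammaSphere_pos hγ _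
  have h1 : (gammaSphere γ k : ℝ) ≤ gammaSphere γ (k + 1) := by
    exact_mod_cast gammaSphere_monotone hγ (by omega)
  have h2 := rpow_le_two_mul_gammaSphere hγ k
  rw [div_le_div_iff₀ h0 (by positivity)]
  linarith

lemma le_edgeLength_gammaSphere (hγ : 0 ≤ γ) (k : ℕ) :
    Real.sqrt (1 / (2 * 3 ^ γ)) * ((k : ℝ) + 1) ^ (-(γ / 2)) ≤ edgeLength (gammaSphere γ) k := by
  rw [← sqrt_div_rpow (by positivity)]
  refine le_trans (Real.sqrt_le_sqrt ?_)
    (le_edgeLength (gammaSphere_pos hγ) (gammaSphere_monotone hγ) k)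
  have h0 : (0 : ℝ) < gammaSphere γ (k + 2) := by exact_mod_cast gammaSphere_pos hγ _
  rw [div_div]
  exact one_div_le_one_div_of_le (by positivity)
    (by linarith [gammaSphere_add_two_le hγ k])

lemma height_gammaSphere_le (hγ : 0 ≤ γ) (hγ2 : γ < 2) (M : ℕ) :
    height (gammaSphere γ) M ≤ Real.sqrt 2 / (1 - γ / 2) * (M : ℝ) ^ (1 - γ / 2) := by
  have hp : 0 < 1 - γ / 2 := by linarith
  have h1 := sum_rpow_sub_one_le hp (by linarith) M
  have h2 : height (gammaSphere γ) M ≤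
      Real.sqrt 2 * ∑ j ∈ Finset.range M, ((j : ℝ) + 1) ^ (1 - γ / 2 - 1) := by
    rw [Finset.mul_sum]
    refine Finset.sum_le_sum fun j _ => ?_
    rw [show 1 - γ / 2 - 1 = -(γ / 2) by ring]
    exact edgeLength_gammaSphere_le hγ j
  rw [div_mul_eq_mul_div, le_div_iff₀ hp]
  nlinarith [Real.sqrt_nonneg 2]

lemma le_height_gammaSphere (hγ : 0 ≤ γ) (hγ2 : γ < 2) (M : ℕ) :
    Real.sqrt (1 / (2 * 3 ^ γ)) * (M : ℝ) ^ (1 - γ / 2) ≤ height (gammaSphere γ) M := by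
  have hsum : (M : ℝ) ^ (1 - γ / 2) ≤ ∑ j ∈ Finset.range M, ((j : ℝ) + 1) ^ (-(γ / 2)) := by
    rcases M.eq_zero_or_pos with rfl | hM
    · simp [Real.zero_rpow (by linarith : 1 - γ / 2 ≠ 0)]
    · have hM' : (0 : ℝ) < M := by exact_mod_cast hM
      have h := Finset.card_nsmul_le_sum (Finset.range M)
        (fun j : ℕ => ((j : ℝ) + 1) ^ (-(γ / 2))) ((M : ℝ) ^ (-(γ / 2))) fun j hj =>
          Real.rpow_le_rpow_of_nonpos (by positivity)
            (by exact_mod_cast Finset.mem_range.1 hj) (by linarith)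
      rwa [Finset.card_range, nsmul_eq_mul, mul_comm, ← Real.rpow_add_one hM'.ne',
        show -(γ / 2) + 1 = 1 - γ / 2 by ring] at h
  refine (mul_le_mul_of_nonneg_left hsum (Real.sqrt_nonneg _)).trans ?_
  rw [Finset.mul_sum]
  exact Finset.sum_le_sum fun j _ => le_edgeLength_gammaSphere hγ j

lemma exists_lt_height_gammaSphere (hγ : 0 ≤ γ) (hγ2 : γ < 2) (R : ℝ) :
    ∃ k, R < height (gammaSphere γ) k := by
  have hc : 0 < Real.sqrt (1 / (2 * 3 ^ γ)) := Real.sqrt_pos.2 (by positivity)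
  have ht := ((tendsto_rpow_atTop (by linarith : 0 < 1 - γ / 2)).comp
    (tendsto_natCast_atTop_atTop (R := ℝ))).const_mul_atTop hc
  obtain ⟨k, hk⟩ := (ht.eventually_gt_atTop R).exists
  exact ⟨k, hk.trans_le (le_height_gammaSphere hγ hγ2 k)⟩

lemma sum_gammaSphere_le (hγ : 0 ≤ γ) (M : ℕ) :
    ∑ k ∈ Finset.range M, (gammaSphere γ k : ℝ) ≤ (M : ℝ) ^ (γ + 1) := by
  have h := Finset.sum_le_card_nsmul (Finset.range M) (fun k : ℕ => (gammaSphere γ k : ℝ))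
    ((M : ℝ) ^ γ) fun k hk => (gammaSphere_le γ k).trans
      (Real.rpow_le_rpow (by positivity) (by exact_mod_cast Finset.mem_range.1 hk) hγ)
  rwa [Finset.card_range, nsmul_eq_mul, mul_comm,
    ← Real.rpow_add_one' (by positivity) (by linarith)] at h

lemma le_sum_gammaSphere (hγ : 0 ≤ γ) (M : ℕ) :
    1 / (2 * (γ + 1)) * (M : ℝ) ^ (γ + 1) ≤ ∑ k ∈ Finset.range M, (gammaSphere γ k : ℝ) := by
  have h1 := le_sum_rpow_sub_one (p := γ + 1) (by linarith) M
  have h2 : ∑ j ∈ Finset.range M, ((j : ℝ) + 1) ^ (γ + 1 - 1) ≤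
      2 * ∑ k ∈ Finset.range M, (gammaSphere γ k : ℝ) := by
    rw [Finset.mul_sum, add_sub_cancel_right]
    exact Finset.sum_le_sum fun j _ => rpow_le_two_mul_gammaSphere hγ j
  rw [div_mul_eq_mul_div, one_mul, div_le_iff₀ (by positivity)]
  nlinarith

lemma cutWeight_gammaSphere_le (hγ : 0 ≤ γ) (k : ℕ) :
    gammaSphere γ k * gammaSphere γ (k + 1) * edgeLength (gammaSphere γ) k ≤
      3 ^ γ * Real.sqrt 2 * ((k : ℝ) + 1) ^ (3 * (γ / 2)) := by
  have ht : (0 : ℝ) < (k : ℝ) + 1 := by positivity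
  have h1 : (gammaSphere γ (k + 1) : ℝ) ≤ gammaSphere γ (k + 2) := by
    exact_mod_cast gammaSphere_monotone hγ (by omega)
  calc (gammaSphere γ k * gammaSphere γ (k + 1) * edgeLength (gammaSphere γ) k : ℝ)
      ≤ ((k : ℝ) + 1) ^ γ * (3 ^ γ * ((k : ℝ) + 1) ^ γ) *
          (Real.sqrt 2 * ((k : ℝ) + 1) ^ (-(γ / 2))) :=
        mul_le_mul (mul_le_mul (gammaSphere_le γ k) (h1.trans (gammaSphere_add_two_le hγ k))
          (by positivity) (by positivity)) (edgeLength_gammaSphere_le hγ k)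
          (edgeLength_nonneg _ _) (by positivity)
    _ = 3 ^ γ * Real.sqrt 2 *
          (((k : ℝ) + 1) ^ γ * ((k : ℝ) + 1) ^ γ * ((k : ℝ) + 1) ^ (-(γ / 2))) := by ring
    _ = _ := by
        rw [← Real.rpow_add ht, ← Real.rpow_add ht]
        ring_nf

lemma le_cutWeight_gammaSphere (hγ : 0 ≤ γ) (k : ℕ) :
    Real.sqrt (1 / (2 * 3 ^ γ)) / 4 * ((k : ℝ) + 1) ^ (3 * (γ / 2)) ≤
      gammaSphere γ k * gammaSphere γ (k + 1) * edgeLength (gammaSphere γ) k := by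
  have ht : (0 : ℝ) < (k : ℝ) + 1 := by positivity
  have h0 := rpow_le_two_mul_gammaSphere hγ k
  have h1 : (gammaSphere γ k : ℝ) ≤ gammaSphere γ (k + 1) := by
    exact_mod_cast gammaSphere_monotone hγ (by omega)
  rw [← ge_iff_le]
  calc (gammaSphere γ k * gammaSphere γ (k + 1) * edgeLength (gammaSphere γ) k : ℝ)
      ≥ (((k : ℝ) + 1) ^ γ / 2) * (((k : ℝ) + 1) ^ γ / 2) *
          (Real.sqrt (1 / (2 * 3 ^ γ)) * ((k : ℝ) + 1) ^ (-(γ / 2))) :=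
        mul_le_mul (mul_le_mul (by linarith) (by linarith) (by positivity) (by positivity))
          (le_edgeLength_gammaSphere hγ k) (by positivity) (by positivity)
    _ = Real.sqrt (1 / (2 * 3 ^ γ)) / 4 *
          (((k : ℝ) + 1) ^ γ * ((k : ℝ) + 1) ^ γ * ((k : ℝ) + 1) ^ (-(γ / 2))) := by ring
    _ = _ := by
        rw [← Real.rpow_add ht, ← Real.rpow_add ht]
        ring_nf

/-- The radius of a ball `{0, …, N}` reaching the root is comparable to `(N + 1) ^ (1 - γ / 2)`. -/
lemma exists_ball_gammaSphere (hγ : 0 ≤ γ) (hγ2 : γ < 2) {x : ℕ} {r : ℝ} (hr1 : 1 ≤ r)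
    (hr : height (gammaSphere γ) x ≤ r) :
    ∃ N : ℕ, ball (gammaSphere γ) x r = ↑(Finset.range (N + 1)) ∧
      r ≤ Real.sqrt 2 / (1 - γ / 2) * ((N : ℝ) + 1) ^ (1 - γ / 2) ∧
      Real.sqrt (1 / (2 * 3 ^ γ)) / 4 * ((N : ℝ) + 1) ^ (1 - γ / 2) ≤ r := by
  obtain ⟨N, hball, h1, h2⟩ := exists_ball_eq_range (gammaSphere_pos hγ)
    (exists_lt_height_gammaSphere hγ hγ2) hr
  have h3 := height_gammaSphere_le hγ hγ2 (N + 1)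
  have h4 := le_height_gammaSphere hγ hγ2 (N + 1)
  push_cast at h3 h4
  refine ⟨N, hball, by linarith [height_nonneg (gammaSphere γ) x], ?_⟩
  have h5 : edgeLength (gammaSphere γ) N ≤ 2 :=
    (edgeLength_gammaSphere_le hγ N).trans <| (mul_le_of_le_one_right (Real.sqrt_nonneg _)
      (Real.rpow_le_one_of_one_le_of_nonpos (by linarith [Nat.cast_nonneg (α := ℝ) N])
        (by linarith))).trans (Real.sqrt_le_iff.2 (by norm_num))
  rw [height_succ] at h4
  linarith

lemma le_isoConst_range (hγ : 0 ≤ γ) {n : ℝ} (hn : 2 < n)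
    (hnd : 2 * (2 * (γ + 1) / (2 - γ)) ≤ n) (hγ2 : γ < 2) (N : ℕ) :
    Real.sqrt (1 / (2 * 3 ^ γ)) / 4 *
        ((N : ℝ) + 1) ^ ((γ + 1) * (2 / n) - (1 - γ / 2)) ≤
      isoConst (wt (gammaSphere γ)) (rho (gammaSphere γ)) (m (gammaSphere γ))
        ↑(Finset.range (N + 1)) n := by
  have hn0 : 0 < n := by linarith
  have hexp : (γ + 1) * (2 / n) - (1 - γ / 2) ≤ 0 := by
    rw [← mul_div_assoc, div_le_iff₀ (by linarith)] at hnd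
    rw [← mul_div_assoc, sub_nonpos, div_le_iff₀ hn0]
    linarith
  refine le_csInf ⟨_, {0}, by simp, by simp, rfl⟩ ?_
  rintro h ⟨W, hW, hne, rfl⟩
  set K := W.max' hne
  have hK : K ∈ W := W.max'_mem hne
  have hmax : ∀ k ∈ W, k ≤ K := fun k hk => W.le_max' k hk
  have hKN : (K : ℝ) ≤ N := by
    have := hW hK
    simp only [Finset.coe_range, Set.mem_Iio] at this
    exact_mod_cast Nat.lt_succ_iff.1 this
  have ht : (0 : ℝ) < (K : ℝ) + 1 := by positivity
  have hpos : 0 < ∑ k ∈ W, m (gammaSphere γ) k :=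
    Finset.sum_pos (fun k _ => by unfold m; exact_mod_cast gammaSphere_pos hγ k) hne
  have hvol : ∑ k ∈ W, m (gammaSphere γ) k ≤ ((K : ℝ) + 1) ^ (γ + 1) := by
    have h := sum_gammaSphere_le hγ (K + 1)
    push_cast at h
    refine le_trans (Finset.sum_le_sum_of_subset_of_nonneg (fun k hk => ?_)
      fun k _ _ => ?_) h
    · exact Finset.mem_range.2 (Nat.lt_succ_of_le (hmax k hk))
    · exact Nat.cast_nonneg _
  rw [le_div_iff₀ (Real.rpow_pos_of_pos hpos _)]
  refine le_trans ?_ ((le_cutWeight_gammaSphere hγ K).trans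
    (le_boundarySum (gammaSphere_pos hγ) hK hmax))
  calc _ ≤ Real.sqrt (1 / (2 * 3 ^ γ)) / 4 *
        ((K : ℝ) + 1) ^ ((γ + 1) * (2 / n) - (1 - γ / 2)) *
          (((K : ℝ) + 1) ^ (γ + 1)) ^ ((n - 2) / n) := by
        refine mul_le_mul (mul_le_mul_of_nonneg_left
          (Real.rpow_le_rpow_of_nonpos ht (by linarith) hexp) (by positivity))
          (Real.rpow_le_rpow hpos.le hvol (div_nonneg (by linarith) hn0.le))
          (by positivity) (by positivity)
    _ = _ := by
        rw [← Real.rpow_mul ht.le, mul_assoc, ← Real.rpow_add ht]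
        congr 2
        field_simp
        ring

lemma isoConst_range_le (hγ : 0 ≤ γ) {n : ℝ} (hn : 2 < n) (N : ℕ) :
    isoConst (wt (gammaSphere γ)) (rho (gammaSphere γ)) (m (gammaSphere γ))
        ↑(Finset.range (N + 1)) n ≤
      2 * (3 ^ γ * Real.sqrt 2) / (1 / (2 * (γ + 1))) ^ ((n - 2) / n) *
        ((N : ℝ) + 1) ^ ((γ + 1) * (2 / n) - (1 - γ / 2)) := by
  have hn0 : 0 < n := by linarith
  have ht : (0 : ℝ) < (N : ℝ) + 1 := by positivity
  have hvol := le_sum_gammaSphere hγ (N + 1)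
  push_cast at hvol
  refine le_trans (csInf_le ⟨0, ?_⟩ ⟨Finset.range (N + 1), subset_rfl, by simp, rfl⟩) ?_
  · rintro h ⟨W, -, -, rfl⟩
    exact div_nonneg (boundarySum_nonneg (gammaSphere_pos hγ) _)
      (Real.rpow_nonneg (Finset.sum_nonneg fun _ _ => Nat.cast_nonneg _) _)
  rw [boundarySum_range (gammaSphere_pos hγ)]
  calc _ ≤ 2 * (3 ^ γ * Real.sqrt 2 * ((N : ℝ) + 1) ^ (3 * (γ / 2))) /
        (1 / (2 * (γ + 1)) * ((N : ℝ) + 1) ^ (γ + 1)) ^ ((n - 2) / n) := by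
        refine div_le_div₀ (by positivity)
          (mul_le_mul_of_nonneg_left (cutWeight_gammaSphere_le hγ N) (by norm_num))
          (by positivity) (Real.rpow_le_rpow (by positivity) hvol
            (div_nonneg (by linarith) hn0.le))
    _ = 2 * (3 ^ γ * Real.sqrt 2) / (1 / (2 * (γ + 1))) ^ ((n - 2) / n) *
          (((N : ℝ) + 1) ^ (3 * (γ / 2)) / ((N : ℝ) + 1) ^ ((γ + 1) * ((n - 2) / n))) := by
        rw [Real.mul_rpow (by positivity) (by positivity), ← Real.rpow_mul ht.le]
        ring
    _ = _ := by
        rw [← Real.rpow_sub ht]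
        congr 2
        field_simp
        ring

end GammaSphere

lemma exists_one_le_inv_mul_le_and_le_mul {a b : ℝ} (ha : 0 < a) :
    ∃ C : ℝ, 1 ≤ C ∧ ∀ X Y : ℝ, 0 ≤ X → a * X ≤ Y → Y ≤ b * X → C⁻¹ * X ≤ Y ∧ Y ≤ C * X := by
  refine ⟨max 1 (max a⁻¹ b), le_max_left _ _, fun X Y hX h1 h2 => ⟨le_trans ?_ h1, h2.trans ?_⟩⟩
  · refine mul_le_mul_of_nonneg_right (inv_le_of_inv_le₀ ha ?_) hX
    exact (le_max_left _ _).trans (le_max_right _ _)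
  · exact mul_le_mul_of_nonneg_right ((le_max_right _ _).trans (le_max_right _ _)) hX


/-- **Isoperimetric inequality for anti-trees.**
For `γ ∈ [0,2)`, `d := 2(γ+1)/(2-γ)` and a real `n` with `n > 2` and `n ≥ 2d`, consider
the one-dimensional graph `b̃` over `(ℕ₀, m̃)` associated with the `γ`-anti-tree, with
intrinsic degree path metric `ρ̃` and closed balls `B̃_k(r)`.  There is `C ≥ 1` such that
for every vertex `x` of the `γ`-anti-tree and every `r ≥ max(1, ρ̃(0,|x|))`:
`C⁻¹ m̃(B̃_{|x|}(r))^{2/n} / r ≤ h̃_{B̃_{|x|}(r),n} ≤ C m̃(B̃_{|x|}(r))^{2/n} / r`. -/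
theorem gammaAntiTree_isoperimetry (γ : ℝ) (hγ0 : 0 ≤ γ) (hγ2 : γ < 2)
    (n : ℝ) (hn2 : 2 < n) (hnd : 2 * (2 * (γ + 1) / (2 - γ)) ≤ n) :
    ∃ C : ℝ, 1 ≤ C ∧ ∀ x : AntiTree (gammaSphere γ), ∀ r : ℝ,
      max 1 (OneDim.rho (gammaSphere γ) 0 x.1) ≤ r →
      C⁻¹ * (OneDim.vol (gammaSphere γ) (OneDim.ball (gammaSphere γ) x.1 r) ^ (2 / n) / r) ≤
          isoConst (OneDim.wt (gammaSphere γ)) (OneDim.rho (gammaSphere γ))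
            (OneDim.m (gammaSphere γ)) (OneDim.ball (gammaSphere γ) x.1 r) n ∧
      isoConst (OneDim.wt (gammaSphere γ)) (OneDim.rho (gammaSphere γ))
            (OneDim.m (gammaSphere γ)) (OneDim.ball (gammaSphere γ) x.1 r) n ≤
          C * (OneDim.vol (gammaSphere γ) (OneDim.ball (gammaSphere γ) x.1 r) ^ (2 / n) / r) := by
  have hn0 : 0 < n := by linarith
  have hp : 0 < 1 - γ / 2 := by linarith
  set c : ℝ := Real.sqrt (1 / (2 * 3 ^ γ)) / 4
  have hc0 : 0 < c := div_pos (Real.sqrt_pos.2 (by positivity)) (by norm_num)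
  set R : ℝ := Real.sqrt 2 / (1 - γ / 2)
  have hR0 : 0 < R := by positivity
  set v : ℝ := 1 / (2 * (γ + 1))
  have hv0 : 0 < v := by positivity
  set B : ℝ := 2 * (3 ^ γ * Real.sqrt 2) / v ^ ((n - 2) / n)
  have hB0 : 0 < B := by positivity
  obtain ⟨C, hC1, hC⟩ := exists_one_le_inv_mul_le_and_le_mul (a := c * c)
    (b := B * (R / v ^ (2 / n))) (by positivity)
  refine ⟨C, hC1, fun x r hr => ?_⟩
  rw [OneDim.rho_zero (gammaSphere_pos hγ0), max_le_iff] at hr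
  obtain ⟨N, hball, hr1, hr2⟩ := exists_ball_gammaSphere hγ0 hγ2 hr.1 hr.2
  have hr0 : 0 < r := by linarith
  have ht : (0 : ℝ) < (N : ℝ) + 1 := by positivity
  have hvol1 := sum_gammaSphere_le hγ0 (N + 1)
  have hvol2 := le_sum_gammaSphere hγ0 (N + 1)
  have hiso1 := le_isoConst_range hγ0 hn2 hnd hγ2 N
  have hiso2 := isoConst_range_le hγ0 hn2 N
  push_cast at hvol1 hvol2
  rw [hball, OneDim.vol_coe]
  set V : ℝ := ∑ k ∈ Finset.range (N + 1), (gammaSphere γ k : ℝ)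
  have hV0 : 0 ≤ V := Finset.sum_nonneg fun _ _ => Nat.cast_nonneg _
  have h2n : 0 ≤ 2 / n := by positivity
  refine hC _ _ (by positivity) (le_trans ?_ hiso1) (hiso2.trans ?_)
  · rw [mul_assoc]
    refine mul_le_mul_of_nonneg_left ?_ hc0.le
    rw [Real.rpow_sub ht, Real.rpow_mul ht.le, ← mul_div_assoc,
      div_le_div_iff₀ hr0 (by positivity)]
    calc c * V ^ (2 / n) * ((N : ℝ) + 1) ^ (1 - γ / 2)
        = V ^ (2 / n) * (c * ((N : ℝ) + 1) ^ (1 - γ / 2)) := by ring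
      _ ≤ _ := mul_le_mul (Real.rpow_le_rpow hV0 hvol1 h2n) hr2 (by positivity) (by positivity)
  · rw [mul_assoc]
    refine mul_le_mul_of_nonneg_left ?_ hB0.le
    rw [Real.rpow_sub ht, Real.rpow_mul ht.le, div_mul_div_comm,
      div_le_div_iff₀ (by positivity) (by positivity)]
    calc (((N : ℝ) + 1) ^ (γ + 1)) ^ (2 / n) * (v ^ (2 / n) * r)
        = (v * ((N : ℝ) + 1) ^ (γ + 1)) ^ (2 / n) * r := by
          rw [Real.mul_rpow hv0.le (by positivity)]; ring
      _ ≤ V ^ (2 / n) * (R * ((N : ℝ) + 1) ^ (1 - γ / 2)) :=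
          mul_le_mul (Real.rpow_le_rpow (by positivity) hvol2 h2n) hr1 hr0.le (by positivity)
      _ = _ := by ring
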